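/- arXiv:2207.04537 — 4 statements merged into one kernel-verified Lean document; each statement's English description precedes it below -/
import Mathlib

section
/- For an integer k ≥ 2, let R̄_k denote the commutative ring ℤ[u, c₁, c₂, c₃, …] (polynomial ring over ℤ in a variable u and countably many variables c_p, p ≥ 1) modulo the ideal generated by the elements c_s² + 2·∑_{p=1}^{s} (−1)^p c_{s+p} c_{s−p} for every s ≥ k+1, together with the element c_k² − u² + 2·∑_{p=1}^{k} (−1)^p c_{k+p} c_{k−p}; here c₀ is interpreted as 1. Let A_k := ℤ[y₁, …, y_k, h]/(h² − y_k). Then there is a well-defined ℤ-algebra homomorphism Ξ : A_k → R̄_k determined by Ξ(y_i) = c_i² + 2·∑_{j=1}^{i} (−1)^j c_{i+j} c_{i−j} for 1 ≤ i ≤ k (with c₀ = 1) and Ξ(h) = u, and Ξ is injective. -/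
/-!
The proof specializes the presented ring `R̄_k` to a polynomial ring in `k` variables. The rule
`u ↦ x₁⋯x_k`, `c_p ↦ e_p(x₁, …, x_k)` sends `Tgen i` to `e_i(x₁², …, x_k²)`: with
`c(t) = ∏ (1 + x_i t)`, compare the coefficients of `t^{2i}` in `c(t) c(-t) = ∏ (1 - x_i² t²)`
(`esymm_sq_identity`). This vanishes for `i > k` and equals `(x₁⋯x_k)²` for `i = k`, so the rule
respects the relations of `R̄_k` and defines a homomorphism `R̄_k → ℤ[x₁, …, x_k]`.

It remains to see that the composite `A_k → ℤ[x₁, …, x_k]` is injective. Every element of `A_k`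
has the form `a + b h` with `a, b ∈ ℤ[y₁, …, y_k]` (`exists_normal_form`), and its image is
`a(e(x²)) + b(e(x²)) x₁⋯x_k`. If this is zero, changing the sign of one variable gives
`a(e(x²)) - b(e(x²)) x₁⋯x_k = 0` as well, so `a(e(x²)) = b(e(x²)) = 0`, and `a = b = 0` since the
elementary symmetric polynomials are algebraically independent and `x_i ↦ x_i²` is injective.
-/

open MvPolynomial Finset

noncomputable section

/-- In the polynomial ring `ℤ[u, c₁, c₂, …]` (variables indexed by `Option ℕ`, where
`none` is `u` and `some p` is `c_p` for `p ≥ 1`), `cv p` denotes `c_p`, with `c₀ = 1`. -/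
def cv : ℕ → MvPolynomial (Option ℕ) ℤ
  | 0 => 1
  | p + 1 => X (some (p + 1))

/-- The defining ideal of `R̄_k`: it is generated by
`c_s² + 2 ∑_{p=1}^s (−1)^p c_{s+p} c_{s−p}` for all `s ≥ k+1`, together with
`c_k² − u² + 2 ∑_{p=1}^k (−1)^p c_{k+p} c_{k−p}`. -/
def RbarIdeal (k : ℕ) : Ideal (MvPolynomial (Option ℕ) ℤ) :=
  Ideal.span
    ({cv k ^ 2 - X none ^ 2 + 2 * ∑ p ∈ Icc 1 k, (-1) ^ p * cv (k + p) * cv (k - p)} ∪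
      {q | ∃ s, k + 1 ≤ s ∧
        q = cv s ^ 2 + 2 * ∑ p ∈ Icc 1 s, (-1) ^ p * cv (s + p) * cv (s - p)})

/-- `Tgen i = c_i² + 2 ∑_{j=1}^i (−1)^j c_{i+j} c_{i−j}` (with `c₀ = 1`). -/
def Tgen (i : ℕ) : MvPolynomial (Option ℕ) ℤ :=
  cv i ^ 2 + 2 * ∑ j ∈ Icc 1 i, (-1) ^ j * cv (i + j) * cv (i - j)

/-- The coefficients of `∏ (1 + a_i t)` are the elementary symmetric functions of the `a_i`. -/
lemma coeff_prod_one_add {ι R : Type*} [Fintype ι] [CommRing R] (a : ι → R) (n : ℕ) :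
    (∏ i, (1 + Polynomial.C (a i) * Polynomial.X)).coeff n =
      ∑ t ∈ powersetCard n univ, ∏ i ∈ t, a i := by
  rw [prod_one_add, Polynomial.finsetSum_coeff]
  simp_rw [prod_mul_distrib, prod_const, ← map_prod, Polynomial.coeff_C_mul_X_pow]
  rw [powersetCard_eq_filter, sum_filter]
  exact sum_congr rfl fun t _ => by simp only [eq_comm]

lemma sum_symmetric_range {R : Type*} [CommRing R] (g : ℕ → R) (s : ℕ)
    (hg : ∀ j ∈ Icc 1 s, g (s - j) = g (s + j)) :
    ∑ i ∈ range (2 * s + 1), g i = g s + 2 * ∑ j ∈ Icc 1 s, g (s + j) := by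
  have h1 : ∑ i ∈ range s, g i = ∑ j ∈ Icc 1 s, g (s + j) := by
    rw [← sum_range_reflect, ← Ico_add_one_right_eq_Icc, sum_Ico_eq_sum_range]
    refine sum_congr (by simp) fun j hj => ?_
    rw [mem_range] at hj
    rw [← hg (1 + j) (by simp; omega), Nat.sub_sub]
  have h2 : ∑ i ∈ range (s + 1), g (s + i) = g s + ∑ j ∈ Icc 1 s, g (s + j) := by
    rw [sum_range_succ', ← Ico_add_one_right_eq_Icc, sum_Ico_eq_sum_range, add_comm]
    simp [add_comm]
  rw [two_mul, add_assoc, sum_range_add, h1, h2]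
  ring

/-- `e_s² + 2 ∑ (-1)^j e_{s+j} e_{s-j}` is the `s`-th elementary symmetric function of the
squares, where `E n` and `F n` denote the elementary symmetric functions of the `a_i` and of the
`a_i²`. -/
lemma esymm_sq_identity {ι R : Type*} [Fintype ι] [CommRing R] (a : ι → R) (E F : ℕ → R)
    (hE : ∀ n, E n = ∑ t ∈ powersetCard n univ, ∏ i ∈ t, a i)
    (hF : ∀ n, F n = ∑ t ∈ powersetCard n univ, ∏ i ∈ t, a i ^ 2) (s : ℕ) :
    E s ^ 2 + 2 * ∑ j ∈ Icc 1 s, (-1) ^ j * E (s + j) * E (s - j) = F s := by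
  let P : Polynomial R := ∏ i, (1 + Polynomial.C (a i) * Polynomial.X)
  let N : Polynomial R := ∏ i, (1 + Polynomial.C (-a i) * Polynomial.X)
  let Q : Polynomial R := ∏ i, (1 + Polynomial.C (-a i ^ 2) * Polynomial.X)
  have hP (n : ℕ) : P.coeff n = E n := (coeff_prod_one_add _ n).trans (hE n).symm
  have hneg (f : ι → R) (n : ℕ) :
      ∑ t ∈ powersetCard n univ, ∏ i ∈ t, -f i =
        (-1) ^ n * ∑ t ∈ powersetCard n univ, ∏ i ∈ t, f i := by
    rw [mul_sum]
    refine sum_congr rfl fun t ht => ?_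
    rw [prod_neg, (mem_powersetCard.mp ht).2]
  have hN (n : ℕ) : N.coeff n = (-1) ^ n * E n := by
    rw [hE, ← hneg]
    exact coeff_prod_one_add _ n
  have hQ (n : ℕ) : Q.coeff n = (-1) ^ n * F n := by
    rw [hF, ← hneg]
    exact coeff_prod_one_add _ n
  have hPN : P * N = Polynomial.expand R 2 Q := by
    simp only [P, N, Q, ← prod_mul_distrib, map_prod]
    refine prod_congr rfl fun i _ => ?_
    simp only [map_add, map_one, map_mul, Polynomial.expand_C, Polynomial.expand_X, map_neg,
      map_pow]
    ring
  have hsign (m : ℕ) : ((-1 : R) ^ m) * (-1) ^ m = 1 := by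
    rw [← mul_pow, neg_one_mul, neg_neg, one_pow]
  have key : (P * N).coeff (2 * s) = (-1) ^ s * F s := by
    rw [hPN, mul_comm 2 s, Polynomial.coeff_expand_mul two_pos, hQ]
  rw [Polynomial.coeff_mul, Nat.sum_antidiagonal_eq_sum_range_succ_mk,
    Nat.succ_eq_add_one, sum_symmetric_range _ s] at key
  · simp only [hP, hN] at key
    rw [show 2 * s - s = s by omega] at key
    have hsum : ∑ j ∈ Icc 1 s, E (s + j) * ((-1) ^ (2 * s - (s + j)) * E (2 * s - (s + j))) =
        (-1) ^ s * ∑ j ∈ Icc 1 s, (-1) ^ j * E (s + j) * E (s - j) := by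
      rw [mul_sum]
      refine sum_congr rfl fun j hj => ?_
      obtain ⟨-, hj⟩ := mem_Icc.mp hj
      obtain ⟨m, rfl⟩ := Nat.exists_eq_add_of_le hj
      rw [show 2 * (j + m) - (j + m + j) = m by omega, show j + m - j = m by omega, pow_add]
      linear_combination (-(-1) ^ m * E (j + m + j) * E m) * hsign j
    rw [hsum] at key
    linear_combination (-1) ^ s * key -
      (E s ^ 2 + 2 * ∑ j ∈ Icc 1 s, (-1) ^ j * E (s + j) * E (s - j) - F s) * hsign s
  · intro j hj
    obtain ⟨-, hj⟩ := mem_Icc.mp hj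
    obtain ⟨m, rfl⟩ := Nat.exists_eq_add_of_le hj
    simp only [hP, hN]
    rw [show 2 * (j + m) - (j + m + j) = m by omega, show j + m - j = m by omega,
      show 2 * (j + m) - m = m + 2 * j by omega, show j + m + j = m + 2 * j by omega,
      pow_add, pow_mul]
    simp only [neg_one_sq, one_pow]
    ring

/-- The specialization `u ↦ x₁⋯x_k`, `c_p ↦ e_p(x₁, …, x_k)`. The unused variable `some 0` is
sent to `e_0 = 1`. -/
def specialize_roots (k : ℕ) : MvPolynomial (Option ℕ) ℤ →ₐ[ℤ] MvPolynomial (Fin k) ℤ :=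
  aeval fun o => o.elim (∏ i, X i) (fun p => esymm (Fin k) ℤ p)

lemma specialize_roots_cv (k p : ℕ) : specialize_roots k (cv p) = esymm (Fin k) ℤ p := by
  cases p <;> simp [cv, specialize_roots]

lemma specialize_roots_u (k : ℕ) : specialize_roots k (X none) = ∏ i, X i := by
  simp [specialize_roots]

lemma specialize_roots_Tgen (k s : ℕ) :
    specialize_roots k (Tgen s) = expand 2 (esymm (Fin k) ℤ s) := by
  rw [← esymm_sq_identity X (esymm (Fin k) ℤ) (fun n => expand 2 (esymm (Fin k) ℤ n))
    (fun _ => rfl) (fun n => by simp only [esymm, map_sum, map_prod, expand_X]) s, Tgen]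
  simp only [map_add, map_mul, map_pow, map_sum, map_neg, map_one, map_ofNat, specialize_roots_cv]

lemma esymm_top (k : ℕ) : esymm (Fin k) ℤ k = ∏ i, X i := by
  have h : powersetCard k (univ : Finset (Fin k)) = {univ} := by
    simpa using powersetCard_self (univ : Finset (Fin k))
  rw [esymm, h, sum_singleton]

lemma RbarIdeal_le_ker (k : ℕ) : ∀ q ∈ RbarIdeal k, specialize_roots k q = 0 := by
  suffices h : RbarIdeal k ≤ RingHom.ker (specialize_roots k) from fun q hq => h hq
  refine Ideal.span_le.mpr ?_
  rintro q (rfl | ⟨s, hs, rfl⟩)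
  · have h := specialize_roots_Tgen k k
    rw [Tgen, esymm_top, map_add] at h
    simp only [map_prod, expand_X, prod_pow] at h
    simp only [SetLike.mem_coe, RingHom.mem_ker, map_add, map_sub, map_pow (specialize_roots k),
      specialize_roots_u] at h ⊢
    linear_combination h
  · have h := specialize_roots_Tgen k s
    have h0 : esymm (Fin k) ℤ s = 0 := by
      rw [esymm, powersetCard_eq_empty.mpr (by simpa using hs), sum_empty]
    rwa [h0, map_zero] at h

/-- Modulo `h² - y_j`, every polynomial in `h` and the `y_i` is of the form `a + b h` with `a`
and `b` polynomials in the `y_i`. -/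
lemma exists_normal_form {k : ℕ} (j : Fin k) (p : MvPolynomial (Option (Fin k)) ℤ) :
    ∃ a b : MvPolynomial (Fin k) ℤ,
      p - (rename some a + rename some b * X none) ∈
        Ideal.span {(X none : MvPolynomial (Option (Fin k)) ℤ) ^ 2 - X (some j)} := by
  induction p using MvPolynomial.induction_on with
  | C r => exact ⟨C r, 0, by simp⟩
  | add p q hp hq =>
    obtain ⟨a, b, h⟩ := hp
    obtain ⟨a', b', h'⟩ := hq
    refine ⟨a + a', b + b', ?_⟩
    convert Ideal.add_mem _ h h' using 1
    simp only [map_add]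
    ring
  | mul_X p o hp =>
    obtain ⟨a, b, h⟩ := hp
    cases o with
    | none =>
      refine ⟨b * X j, a, ?_⟩
      convert Ideal.add_mem _ (Ideal.mul_mem_right (X none) _ h)
        (Ideal.mul_mem_left _ (rename some b) (Ideal.mem_span_singleton_self _)) using 1
      simp only [map_mul, rename_X]
      ring
    | some i =>
      refine ⟨a * X i, b * X i, ?_⟩
      convert Ideal.mul_mem_right (X (some i)) _ h using 1
      simp only [map_mul, rename_X]
      ring

/-- The substitution `y_i ↦ e_i(x₁², …, x_k²)`, where `y_i` is the variable with index `i - 1`. -/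
def evalSq (k : ℕ) : MvPolynomial (Fin k) ℤ →ₐ[ℤ] MvPolynomial (Fin k) ℤ :=
  (expand 2).comp (aeval fun i : Fin k => esymm (Fin k) ℤ (i + 1))

lemma evalSq_injective (k : ℕ) : Function.Injective (evalSq k) := by
  refine (expand_injective (R := ℤ) (σ := Fin k) two_pos).comp fun p q h => ?_
  refine esymmAlgHom_injective ℤ (σ := Fin k) (n := k) (by simp) (Subtype.ext ?_)
  rw [esymmAlgHom_apply, esymmAlgHom_apply]
  exact h

/-- Changing the sign of one variable fixes the image of `evalSq` and negates `x₁⋯x_k`, so `1` and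
`x₁⋯x_k` are linearly independent over that image. -/
lemma evalSq_add_mul_prod_eq_zero {k : ℕ} (hk : 0 < k) {a b : MvPolynomial (Fin k) ℤ}
    (h : evalSq k a + evalSq k b * ∏ i, X i = 0) : a = 0 ∧ b = 0 := by
  let ε : Fin k → MvPolynomial (Fin k) ℤ := fun i => if i = ⟨0, hk⟩ then -1 else 1
  let σ : MvPolynomial (Fin k) ℤ →ₐ[ℤ] MvPolynomial (Fin k) ℤ := aeval fun i => ε i * X i
  have hσ : σ.comp (expand 2) = expand 2 := by
    ext1 i
    simp only [AlgHom.comp_apply, expand_X, map_pow, σ, aeval_X, ε]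
    split_ifs <;> ring
  have hσe (p : MvPolynomial (Fin k) ℤ) : σ (evalSq k p) = evalSq k p :=
    DFunLike.congr_fun hσ _
  have hσp : σ (∏ i, X i) = -∏ i, X i := by
    simp only [σ, ε, map_prod, aeval_X, prod_mul_distrib, prod_ite_eq', mem_univ, if_true,
      neg_one_mul]
  have h' := congrArg σ h
  rw [map_add, map_mul, hσe, hσe, hσp, map_zero] at h'
  have ha : evalSq k a = 0 := by
    refine (mul_eq_zero.mp (?_ : 2 * evalSq k a = 0)).resolve_left two_ne_zero
    linear_combination h + h'
  rw [ha, zero_add] at h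
  have hb : evalSq k b = 0 :=
    (mul_eq_zero.mp h).resolve_right (prod_ne_zero_iff.mpr fun i _ => X_ne_zero i)
  exact ⟨evalSq_injective k (by rw [ha, map_zero]), evalSq_injective k (by rw [hb, map_zero])⟩

/-- For `k ≥ 2`, let `A_k = ℤ[y₁, …, y_k, h]/(h² − y_k)` (variables indexed by
`Option (Fin k)`, `none` being `h` and `some i` being `y_{i+1}`) and let `R̄_k` be the
ring presented by `RbarIdeal k`.  There is a well-defined injective ring homomorphism
`Ξ : A_k → R̄_k` with `Ξ(y_i) = c_i² + 2 ∑_{j=1}^i (−1)^j c_{i+j} c_{i−j}` for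
`1 ≤ i ≤ k` and `Ξ(h) = u`. -/
theorem stmt_2 (k : ℕ) (hk : 2 ≤ k) :
    ∃ Ξ : (MvPolynomial (Option (Fin k)) ℤ ⧸
            Ideal.span {(X none : MvPolynomial (Option (Fin k)) ℤ) ^ 2
              - X (some ⟨k - 1, by omega⟩)}) →+*
          (MvPolynomial (Option ℕ) ℤ ⧸ RbarIdeal k),
      (∀ i : Fin k,
        Ξ (Ideal.Quotient.mk _ (X (some i))) = Ideal.Quotient.mk _ (Tgen ((i : ℕ) + 1))) ∧
      Ξ (Ideal.Quotient.mk _ (X none)) = Ideal.Quotient.mk _ (X none) ∧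
      Function.Injective Ξ := by
  let φ : MvPolynomial (Option (Fin k)) ℤ →ₐ[ℤ] (MvPolynomial (Option ℕ) ℤ ⧸ RbarIdeal k) :=
    aeval fun o => o.elim (Ideal.Quotient.mk _ (X none))
      (fun i : Fin k => Ideal.Quotient.mk _ (Tgen ((i : ℕ) + 1)))
  have φ_y (i : Fin k) : φ (X (some i)) = Ideal.Quotient.mk _ (Tgen ((i : ℕ) + 1)) := by
    simp [φ]
  have φ_h : φ (X none) = Ideal.Quotient.mk _ (X none) := by simp [φ]
  have hφ : ∀ q ∈ Ideal.span {(X none : MvPolynomial (Option (Fin k)) ℤ) ^ 2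
      - X (some ⟨k - 1, by omega⟩)}, φ.toRingHom q = 0 := by
    suffices h : Ideal.span {(X none : MvPolynomial (Option (Fin k)) ℤ) ^ 2
      - X (some ⟨k - 1, by omega⟩)} ≤ RingHom.ker φ.toRingHom from fun q hq => h hq
    rw [Ideal.span_singleton_le_iff_mem, RingHom.mem_ker]
    change φ _ = 0
    rw [map_sub, map_pow, φ_h, φ_y, ← map_pow, ← map_sub, Ideal.Quotient.eq_zero_iff_mem]
    simp only [Nat.sub_add_cancel (by omega : 1 ≤ k)]
    rw [← Ideal.neg_mem_iff]
    refine Ideal.subset_span (Or.inl ?_)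
    rw [Set.mem_singleton_iff, Tgen]
    ring
  -- `ψ` is the specialization to `ℤ[x₁, …, x_k]`; injectivity is tested after composing with it.
  let ψ : (MvPolynomial (Option ℕ) ℤ ⧸ RbarIdeal k) →+* MvPolynomial (Fin k) ℤ :=
    Ideal.Quotient.lift _ (specialize_roots k).toRingHom (RbarIdeal_le_ker k)
  have ψ_mk (p : MvPolynomial (Option ℕ) ℤ) :
      ψ (Ideal.Quotient.mk _ p) = specialize_roots k p := rfl
  have ψφ (a : MvPolynomial (Fin k) ℤ) : ψ (φ (rename some a)) = evalSq k a := by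
    have h : (ψ.comp φ.toRingHom).comp (rename some).toRingHom = (evalSq k).toRingHom := by
      refine MvPolynomial.ringHom_ext' (Subsingleton.elim _ _) fun i => ?_
      change ψ (φ (rename some (X i))) = expand 2 (aeval _ (X i))
      rw [rename_X, φ_y, ψ_mk, specialize_roots_Tgen, aeval_X]
    exact DFunLike.congr_fun h a
  refine ⟨Ideal.Quotient.lift _ φ.toRingHom hφ, φ_y, φ_h, ?_⟩
  rw [injective_iff_map_eq_zero]
  intro x hx
  obtain ⟨p, rfl⟩ := Ideal.Quotient.mk_surjective x
  obtain ⟨a, b, hab⟩ := exists_normal_form ⟨k - 1, by omega⟩ p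
  have hp : φ p = 0 := hx
  have h1 : φ (p - (rename some a + rename some b * X none)) = 0 := hφ _ hab
  rw [map_sub, hp, zero_sub, neg_eq_zero, map_add, map_mul, φ_h] at h1
  have h2 := congrArg ψ h1
  rw [map_add, map_mul, ψφ, ψφ, ψ_mk, specialize_roots_u, map_zero] at h2
  obtain ⟨rfl, rfl⟩ := evalSq_add_mul_prod_eq_zero (by omega) h2
  rw [Ideal.Quotient.eq_zero_iff_mem]
  simpa using hab

end
end

section
/- For an integer k ≥ 2, let R̄_k denote the commutative ring ℤ[u, c₁, c₂, c₃, …] (polynomial ring over ℤ in a variable u and countably many variables c_p, p ≥ 1) modulo the ideal generated by the elements c_s² + 2·∑_{p=1}^{s} (−1)^p c_{s+p} c_{s−p} for every s ≥ k+1, together with the element c_k² − u² + 2·∑_{p=1}^{k} (−1)^p c_{k+p} c_{k−p}; here c₀ is interpreted as 1. Then the ring homomorphism η : ℤ[y₁, …, y_k] → R̄_k determined by η(y_i) = c_i² + 2·∑_{j=1}^{i} (−1)^j c_{i+j} c_{i−j} for 1 ≤ i ≤ k (with c₀ = 1) is injective. -/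
/-!
Setting `c_p = 0` for `p > k` and `u = c_k` kills the defining ideal, since then every
`c_{s+p}` with `s ≥ k`, `p ≥ 1` vanishes. This gives a retraction `specialize k` of the quotient
onto `ℤ[c₁, …, c_k]`, and it suffices that the endomorphism
`y_i ↦ c_i² + 2 ∑ (−1)^j c_{i+j} c_{i−j}` of the polynomial ring in `k` variables be injective.
Modulo `2` that endomorphism is `y_i ↦ c_i²`, which over `𝔽₂` is the Frobenius map and hence
injective. A polynomial in the kernel over `ℤ` is therefore divisible by `2`; its half is again in
the kernel, so it is divisible by every power of `2`, and it vanishes.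
-/

open MvPolynomial Finset

noncomputable section

/-- An endomorphism of `ℤ[X_i]` lifting the Frobenius map modulo `2` is injective. -/
theorem injective_of_lifts_frobenius {σ : Type*}
    (φ : MvPolynomial σ ℤ →+* MvPolynomial σ ℤ)
    (hφ : ∀ i, map (Int.castRingHom (ZMod 2)) (φ (X i)) = X i ^ 2) :
    Function.Injective φ := by
  have : Fact (Nat.Prime 2) := ⟨Nat.prime_two⟩
  have hcomp : ∀ f, map (Int.castRingHom (ZMod 2)) (φ f) =
      (map (Int.castRingHom (ZMod 2)) f) ^ 2 := by
    intro f
    have h : (map (Int.castRingHom (ZMod 2))).comp φ =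
        (frobenius (MvPolynomial σ (ZMod 2)) 2).comp (map (Int.castRingHom (ZMod 2))) := by
      refine MvPolynomial.ringHom_ext (fun r => ?_) (fun i => ?_)
      · simp
      · simp [frobenius_def, hφ]
    simpa [frobenius_def] using congrArg (fun g => g f) h
  have hdiv : ∀ f, φ f = 0 → C (2 : ℤ) ∣ f := by
    intro f hf
    have h := hcomp f
    rw [hf, map_zero] at h
    exact (C_dvd_iff_zmod 2 f).2 (pow_eq_zero_iff two_ne_zero |>.1 h.symm)
  have hpow : ∀ n : ℕ, ∀ f, φ f = 0 → C ((2 : ℤ) ^ n) ∣ f := by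
    intro n
    induction n with
    | zero => intro f _; simp
    | succ n ih =>
      intro f hf
      obtain ⟨g, rfl⟩ := hdiv f hf
      have hg : φ g = 0 := by
        have h2 : φ (C (2 : ℤ)) = 2 := by
          rw [show (C (2 : ℤ) : MvPolynomial σ ℤ) = 2 from map_ofNat C 2, map_ofNat]
        rw [map_mul, h2] at hf
        exact (mul_eq_zero.1 hf).resolve_left two_ne_zero
      rw [pow_succ', C_mul]
      exact mul_dvd_mul_left _ (ih g hg)
  refine (injective_iff_map_eq_zero φ).2 fun f hf => ?_
  ext m
  rw [coeff_zero]
  refine Int.eq_zero_of_abs_lt_dvd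
    ((C_dvd_iff_dvd_coeff _ _).1 (hpow (coeff m f).natAbs f hf) m) ?_
  rw [Int.abs_eq_natAbs]
  exact_mod_cast Nat.lt_two_pow_self

/-- The value of `c_p` under the specialization: the variables of `ℤ[c₁, …, c_k]` are indexed by
`Fin k`, so `c_p` becomes `X (p - 1)` for `1 ≤ p ≤ k`. All other `p` give `0`; the index `p = 0`
is not used by `cv`. -/
def specializeVar (k p : ℕ) : MvPolynomial (Fin k) ℤ :=
  if h : 1 ≤ p ∧ p ≤ k then X ⟨p - 1, by omega⟩ else 0

/-- The homomorphism `ℤ[u, c₁, c₂, …] → ℤ[c₁, …, c_k]` with `u ↦ c_k` and `c_p ↦ 0` for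
`p > k`. -/
def specialize (k : ℕ) : MvPolynomial (Option ℕ) ℤ →+* MvPolynomial (Fin k) ℤ :=
  eval₂Hom (Int.castRingHom _) fun o => o.elim (specializeVar k k) (specializeVar k)

theorem specialize_cv {k p : ℕ} (hp : 1 ≤ p) : specialize k (cv p) = specializeVar k p := by
  obtain ⟨p, rfl⟩ := Nat.exists_eq_add_of_le' hp
  simp [cv, specialize]

theorem specialize_cv_eq_zero {k p : ℕ} (hp : k < p) : specialize k (cv p) = 0 := by
  rw [specialize_cv (by omega), specializeVar, dif_neg (by omega)]

theorem specialize_sum_eq_zero {k s : ℕ} (hs : k ≤ s) :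
    specialize k (∑ p ∈ Icc 1 s, (-1) ^ p * cv (s + p) * cv (s - p)) = 0 := by
  rw [map_sum]
  refine Finset.sum_eq_zero fun p hp => ?_
  have hp1 := (Finset.mem_Icc.1 hp).1
  rw [map_mul, map_mul, specialize_cv_eq_zero (show k < s + p by omega), mul_zero, zero_mul]

theorem specialize_eq_zero_of_mem {k : ℕ} (hk : 1 ≤ k) {q : MvPolynomial (Option ℕ) ℤ}
    (hq : q ∈ RbarIdeal k) : specialize k q = 0 := by
  have hle : RbarIdeal k ≤ RingHom.ker (specialize k) := by
    refine Ideal.span_le.2 ?_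
    rintro q (rfl | ⟨s, hs, rfl⟩)
    · have hu : specialize k (X none) = specializeVar k k := by simp [specialize]
      rw [SetLike.mem_coe, RingHom.mem_ker, map_add, map_mul, specialize_sum_eq_zero le_rfl,
        map_sub, map_pow, map_pow, hu, specialize_cv hk, sub_self, mul_zero, add_zero]
    · rw [SetLike.mem_coe, RingHom.mem_ker, map_add, map_mul,
        specialize_sum_eq_zero (by omega), map_pow, specialize_cv_eq_zero (by omega)]
      simp
  exact hle hq

/-- For `k ≥ 2`, the ring homomorphism `η : ℤ[y₁, …, y_k] → R̄_k` determined by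
`η(y_i) = c_i² + 2 ∑_{j=1}^i (−1)^j c_{i+j} c_{i−j}` for `1 ≤ i ≤ k` is injective. -/
theorem stmt_3 (k : ℕ) (hk : 2 ≤ k) :
    Function.Injective
      ((Ideal.Quotient.mk (RbarIdeal k)).comp
        (MvPolynomial.eval₂Hom (Int.castRingHom (MvPolynomial (Option ℕ) ℤ))
          (fun i : Fin k => Tgen ((i : ℕ) + 1)))) := by
  set η := MvPolynomial.eval₂Hom (Int.castRingHom (MvPolynomial (Option ℕ) ℤ))
    (fun i : Fin k => Tgen ((i : ℕ) + 1)) with hη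
  have hinj : Function.Injective ((specialize k).comp η) := by
    refine injective_of_lifts_frobenius _ fun i => ?_
    have hv : specializeVar k (i + 1) = X i := by
      rw [specializeVar, dif_pos (by omega)]
      rfl
    have htwo : (2 : MvPolynomial (Fin k) (ZMod 2)) = 0 := CharTwo.two_eq_zero
    rw [RingHom.comp_apply, hη, coe_eval₂Hom, eval₂_X, Tgen, map_add, map_add, map_pow,
      specialize_cv (by omega), hv, map_mul, map_mul, map_ofNat, map_ofNat, htwo, zero_mul,
      add_zero, map_pow, map_X]
  refine (injective_iff_map_eq_zero _).2 fun f hf => ?_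
  rw [RingHom.comp_apply, Ideal.Quotient.eq_zero_iff_mem] at hf
  exact (injective_iff_map_eq_zero _).1 hinj f (specialize_eq_zero_of_mem (by omega) hf)

end
end

section
/- For an integer k ≥ 2, let B_k denote the 𝔽₂-algebra 𝔽₂[u, c₁, c₂, c₃, …] (polynomial ring over the field 𝔽₂ = ℤ/2ℤ in a variable u and countably many variables c_p, p ≥ 1) modulo the ideal generated by u² − c_k² and by c_s² for all s ≥ k+1. Then the 𝔽₂-algebra homomorphism 𝔽₂[y₁, …, y_k] → B_k sending y_i ↦ c_i² for 1 ≤ i ≤ k is injective. -/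
/-!
A homomorphism out of `B_k` detects the squares: send `c_p ↦ y_p` for `1 ≤ p ≤ k`, send `u ↦ y_k`,
and send every other variable to `0`. Both families of relations die, and the composite
`𝔽₂[y₁, …, y_k] → B_k → 𝔽₂[y₁, …, y_k]` is `y_i ↦ y_i²`, i.e. `MvPolynomial.expand 2`, which
is injective because it sends distinct monomials to distinct monomials.
-/

open MvPolynomial

noncomputable section

/-- The defining ideal of `B_k`: in `𝔽₂[u, c₁, c₂, …]` (variables indexed by `Option ℕ`,
`none` being `u` and `some p` being `c_p` for `p ≥ 1`), it is generated by `u² − c_k²`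
together with `c_s²` for all `s ≥ k+1`. -/
def Bideal (k : ℕ) : Ideal (MvPolynomial (Option ℕ) (ZMod 2)) :=
  Ideal.span
    ({(X none : MvPolynomial (Option ℕ) (ZMod 2)) ^ 2 - X (some k) ^ 2} ∪
      {q | ∃ s, k + 1 ≤ s ∧ q = (X (some s) : MvPolynomial (Option ℕ) (ZMod 2)) ^ 2})

/-- The values of the detecting homomorphism on the variables: `c_p ↦ y_p` for `1 ≤ p ≤ k`,
and `0` on the other `c_p`; the variable `u` gets the same value as `c_k`. The variable `y_p` is
indexed by `p - 1 : Fin k`. -/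
def detectVar (k : ℕ) (o : Option ℕ) : MvPolynomial (Fin k) (ZMod 2) :=
  if h : 1 ≤ o.getD k ∧ o.getD k ≤ k then X ⟨o.getD k - 1, by omega⟩ else 0

lemma Bideal_le_ker (k : ℕ) (a : MvPolynomial (Option ℕ) (ZMod 2)) (ha : a ∈ Bideal k) :
    aeval (detectVar k) a = 0 := by
  have hle : Bideal k ≤ RingHom.ker (aeval (R := ZMod 2) (detectVar k)) := by
    refine Ideal.span_le.2 ?_
    rintro q (rfl | ⟨s, hs, rfl⟩)
    · simp [detectVar]
    · have h : ¬ s ≤ k := by omega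
      simp [detectVar, h]
  exact hle ha

/-- For `k ≥ 2`, the `𝔽₂`-algebra homomorphism `𝔽₂[y₁, …, y_k] → B_k` sending
`y_i ↦ c_i²` for `1 ≤ i ≤ k` is injective. -/
theorem stmt_4 (k : ℕ) (hk : 2 ≤ k) :
    Function.Injective
      ((Ideal.Quotient.mkₐ (ZMod 2) (Bideal k)).comp
        (MvPolynomial.aeval (fun i : Fin k =>
          (X (some ((i : ℕ) + 1)) : MvPolynomial (Option ℕ) (ZMod 2)) ^ 2))) := by
  let ψ := Ideal.Quotient.liftₐ (Bideal k) (aeval (detectVar k)) (Bideal_le_ker k)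
  have hcomp : ψ.comp ((Ideal.Quotient.mkₐ (ZMod 2) (Bideal k)).comp
      (aeval (fun i : Fin k =>
        (X (some ((i : ℕ) + 1)) : MvPolynomial (Option ℕ) (ZMod 2)) ^ 2))) = expand 2 := by
    refine MvPolynomial.algHom_ext fun i => ?_
    have hi : (i : ℕ) + 1 ≤ k := i.2
    have hψ (a : MvPolynomial (Option ℕ) (ZMod 2)) :
        ψ (Ideal.Quotient.mkₐ (ZMod 2) (Bideal k) a) = aeval (detectVar k) a := rfl
    rw [AlgHom.comp_apply, AlgHom.comp_apply, hψ, aeval_X, map_pow, aeval_X, expand_X]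
    simp [detectVar, hi]
  refine Function.Injective.of_comp (f := ψ) ?_
  rw [← AlgHom.coe_comp, hcomp]
  exact expand_injective two_pos

end
end

section
/- For an integer k ≥ 2, let R_k denote the polynomial ring over ℤ in variables τ₁, …, τ_{k−1}, τ_k, τ_k′, τ_{k+1}, τ_{k+2}, … modulo the ideal generated by the elements τ_s² + ∑_{p=1}^{s} (−1)^p τ_{s+p} c_{s−p} for all s ≥ k+1 and by τ_k τ_k′ + ∑_{p=1}^{k} (−1)^p τ_{k+p} τ_{k−p}, where τ₀ := 1 and where c_p := τ_p for 0 ≤ p < k, c_k := τ_k + τ_k′, and c_p := 2τ_p for p > k. Then the ℂ-algebra R_k ⊗_ℤ ℂ is not finitely generated as a ℂ-algebra. -/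
/-!
Modulo products of two positive-degree classes, the linear part of a relation comes only from the
summand with `c₀ = 1` or `τ₀ = 1`, that is from `τ_{2s}` (resp. `τ_{2k}`). So the odd classes
`τ₁, τ₃, τ₅, …` remain linearly independent in the space of indecomposables.

Concretely, let `V = ℕ →₀ ℂ` and let `A = ℂ ⊕ V` be the trivial square-zero extension. Sending
`τ_{2j+1}` to the `j`-th basis vector of `V` and all other generators to `0` kills the defining
ideal (`RIdeal_le_ker`), and so gives a `ℂ`-algebra map `ℂ ⊗ R_k → A` (`exists_oddHom`). If a finite set
generated `ℂ ⊗ R_k`, then the `V`-components of its image would span `V`, since in `A` the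
`V`-component of a product is a `ℂ`-combination of the `V`-components of its factors
(`snd_mem_span`). But `V` is infinite-dimensional.
-/

open MvPolynomial Finset TensorProduct

noncomputable section

/-- In the polynomial ring with variables indexed by `Option ℕ` (where `some p` is the
Schubert class `τ_p` for `p ≥ 1` and `none` is `τ_k'`), `tau p` denotes `τ_p`,
with `τ₀ = 1`. -/
def tau : ℕ → MvPolynomial (Option ℕ) ℤ
  | 0 => 1
  | p + 1 => X (some (p + 1))

/-- The Chern class `c_p` of `R_k`: `c_p = τ_p` for `p < k`, `c_k = τ_k + τ_k'`,
and `c_p = 2 τ_p` for `p > k`. -/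
def cS (k p : ℕ) : MvPolynomial (Option ℕ) ℤ :=
  if p < k then tau p else if p = k then tau k + X none else 2 * tau p

/-- The defining ideal of `R_k` (Proposition 3.9): generated by
`τ_s² + ∑_{p=1}^s (−1)^p τ_{s+p} c_{s−p}` for `s ≥ k+1`, together with
`τ_k τ_k' + ∑_{p=1}^k (−1)^p τ_{k+p} τ_{k−p}`. -/
def RIdeal (k : ℕ) : Ideal (MvPolynomial (Option ℕ) ℤ) :=
  Ideal.span
    ({tau k * X none + ∑ p ∈ Icc 1 k, (-1) ^ p * tau (k + p) * tau (k - p)} ∪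
      {q | ∃ s, k + 1 ≤ s ∧
        q = tau s ^ 2 + ∑ p ∈ Icc 1 s, (-1) ^ p * tau (s + p) * cS k (s - p)})

/-- The square-zero extension `ℂ ⊕ V`, where `V` has one basis vector per odd class `τ_{2j+1}`. -/
abbrev OddExt : Type := TrivSqZeroExt ℂ (ℕ →₀ ℂ)

/-- The image in `V` of each generator: `τ_{2j+1}` goes to the `j`-th basis vector, while `τ_k'`
and the even classes go to `0`. -/
def oddVec : Option ℕ → (ℕ →₀ ℂ)
  | none => 0
  | some p => if Odd p then Finsupp.single (p / 2) 1 else 0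

/-- The ring map `ℤ[τ₁, …, τ_k', …] → ℂ ⊕ V` reading off the odd linear part. -/
def oddMap : MvPolynomial (Option ℕ) ℤ →ₐ[ℤ] OddExt :=
  aeval fun i => TrivSqZeroExt.inr (oddVec i)

lemma oddMap_tau {p : ℕ} (hp : p ≠ 0) :
    oddMap (tau p) = TrivSqZeroExt.inr (oddVec (some p)) := by
  cases p with
  | zero => exact absurd rfl hp
  | succ n => simp [tau, oddMap]

lemma oddMap_tau_even (p : ℕ) (hp : p ≠ 0) : oddMap (tau (p + p)) = 0 := by
  have h : ¬ Odd (p + p) := Nat.not_odd_iff_even.2 (Even.add_self p)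
  rw [oddMap_tau (by omega), oddVec, if_neg h, TrivSqZeroExt.inr_zero]

lemma oddMap_cS (k : ℕ) {p : ℕ} (hp : p ≠ 0) :
    ∃ w, oddMap (cS k p) = TrivSqZeroExt.inr w := by
  unfold cS
  split_ifs with h₁ h₂
  · exact ⟨_, oddMap_tau hp⟩
  · subst h₂
    refine ⟨oddVec (some p), ?_⟩
    rw [map_add, oddMap_tau hp]
    simp [oddMap, oddVec]
  · refine ⟨oddVec (some p) + oddVec (some p), ?_⟩
    rw [two_mul, map_add, oddMap_tau hp, TrivSqZeroExt.inr_add]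

lemma RIdeal_le_ker {k : ℕ} (hk : k ≠ 0) : RIdeal k ≤ RingHom.ker oddMap := by
  refine Ideal.span_le.2 ?_
  rintro q (rfl | ⟨s, hs, rfl⟩)
  · rw [SetLike.mem_coe, RingHom.mem_ker, map_add, map_sum, Finset.sum_eq_zero, add_zero, map_mul]
    · simp [oddMap, oddVec]
    · intro p hp
      rw [Finset.mem_Icc] at hp
      rw [map_mul, map_mul]
      rcases hp.2.eq_or_lt with rfl | h
      · rw [oddMap_tau_even _ hk, mul_zero, zero_mul]
      · rw [oddMap_tau (by omega), oddMap_tau (by omega), mul_assoc, TrivSqZeroExt.inr_mul_inr,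
          mul_zero]
  · rw [SetLike.mem_coe, RingHom.mem_ker, map_add, map_sum, Finset.sum_eq_zero, add_zero, map_pow]
    · rw [oddMap_tau (by omega), sq, TrivSqZeroExt.inr_mul_inr]
    · intro p hp
      rw [Finset.mem_Icc] at hp
      rw [map_mul, map_mul]
      rcases hp.2.eq_or_lt with rfl | h
      · rw [oddMap_tau_even _ (by omega), mul_zero, zero_mul]
      · obtain ⟨w, hw⟩ := oddMap_cS k (p := s - p) (by omega)
        rw [oddMap_tau (by omega), hw, mul_assoc, TrivSqZeroExt.inr_mul_inr, mul_zero]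

/-- Generators of an algebra mapping to `ℂ ⊕ V` have `V`-components spanning those of all
elements, because `V² = 0`. -/
lemma snd_mem_span {B : Type*} [Semiring B] [Algebra ℂ B] (F : B →ₐ[ℂ] OddExt) (S : Set B)
    {x : B} (hx : x ∈ Algebra.adjoin ℂ S) :
    (F x).snd ∈ Submodule.span ℂ ((fun b => (F b).snd) '' S) := by
  induction hx using Algebra.adjoin_induction with
  | mem x hx => exact Submodule.subset_span ⟨x, hx, rfl⟩
  | algebraMap r =>
    rw [AlgHom.commutes, TrivSqZeroExt.algebraMap_eq_inl, TrivSqZeroExt.snd_inl]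
    exact Submodule.zero_mem _
  | add x y _ _ hx hy =>
    rw [map_add, TrivSqZeroExt.snd_add]
    exact Submodule.add_mem _ hx hy
  | mul x y _ _ hx hy =>
    rw [map_mul, TrivSqZeroExt.snd_mul, op_smul_eq_smul]
    exact Submodule.add_mem _ (Submodule.smul_mem _ _ hy) (Submodule.smul_mem _ _ hx)

/-- The map `ℂ ⊗ R_k → ℂ ⊕ V` induced by `oddMap`; the `j`-th basis vector is the `V`-component of
the image of `τ_{2j+1}`. -/
lemma exists_oddHom {k : ℕ} (hk : k ≠ 0) :
    ∃ F : ℂ ⊗[ℤ] (MvPolynomial (Option ℕ) ℤ ⧸ RIdeal k) →ₐ[ℂ] OddExt, ∀ j : ℕ,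
      ∃ x, (F x).snd = Finsupp.single j 1 := by
  refine ⟨Algebra.TensorProduct.lift (Algebra.ofId ℂ OddExt)
    (Ideal.Quotient.liftₐ (RIdeal k) oddMap fun a ha => RIdeal_le_ker hk ha)
    fun _ _ => Commute.all _ _, fun j =>
    ⟨1 ⊗ₜ Ideal.Quotient.mk _ (tau (2 * j + 1)), ?_⟩⟩
  have hj : (2 * j + 1) / 2 = j := by omega
  rw [Algebra.TensorProduct.lift_tmul, map_one, one_mul]
  change (oddMap (tau (2 * j + 1))).snd = _
  rw [oddMap_tau (by omega), TrivSqZeroExt.snd_inr]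
  simp [oddVec, hj]

/-- An algebra with a map to `ℂ ⊕ V` whose `V`-components contain a basis of the
infinite-dimensional space `V` is not finitely generated. -/
lemma not_finiteType_of_hom {B : Type*} [Semiring B] [Algebra ℂ B] (F : B →ₐ[ℂ] OddExt)
    (hF : ∀ j : ℕ, ∃ x, (F x).snd = Finsupp.single j 1) : ¬ Algebra.FiniteType ℂ B := by
  rintro ⟨S, hS⟩
  have htop : Submodule.span ℂ ((fun b => (F b).snd) '' (S : Set B)) = ⊤ := by
    rw [eq_top_iff, ← Finsupp.basisSingleOne.span_eq, Submodule.span_le]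
    rintro _ ⟨j, rfl⟩
    obtain ⟨x, hx⟩ := hF j
    rw [Finsupp.coe_basisSingleOne]
    change Finsupp.single j 1 ∈ Submodule.span ℂ _
    rw [← hx]
    exact snd_mem_span F _ (hS ▸ Algebra.mem_top)
  have hfin : Module.Finite ℂ (ℕ →₀ ℂ) :=
    ⟨Submodule.fg_def.2 ⟨_, S.finite_toSet.image _, htop⟩⟩
  exact not_finite_iff_infinite.2 inferInstance
    (Module.Finite.finite_basis (Finsupp.basisSingleOne (R := ℂ) (ι := ℕ)))

/-- For `k ≥ 2`, the ℂ-algebra `R_k ⊗_ℤ ℂ` (the stable cohomology ring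
`ℍ*(OG_k, ℂ)`) is not finitely generated as a ℂ-algebra. -/
theorem stmt_10 (k : ℕ) (hk : 2 ≤ k) :
    ¬ Algebra.FiniteType ℂ (ℂ ⊗[ℤ] (MvPolynomial (Option ℕ) ℤ ⧸ RIdeal k)) := by
  obtain ⟨F, hF⟩ := exists_oddHom (k := k) (by omega)
  exact not_finiteType_of_hom F hF

end
end
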